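/- arXiv:2110.03077 — 2 statements merged into one kernel-verified Lean document; each statement's English description precedes it below -/
import Mathlib

section
/- For n = 4, the complex dimension of the χ'-isotypic component of the diagonal coinvariant ring R_W of W(B_4) satisfies dim_ℂ (R_W)^{χ'} ≥ 6. -/
open MvPolynomial

/-- The action of the signed permutation `(ε, σ) ∈ W(Bₙ)` on the polynomial ring
`ℂ[x₁,…,xₙ,y₁,…,yₙ]`, sending `xᵢ ↦ εᵢ x_{σ(i)}` and `yᵢ ↦ εᵢ y_{σ(i)}`. -/
noncomputable def bAct (n : ℕ) (ε : Fin n → ℤˣ) (σ : Equiv.Perm (Fin n)) :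
    MvPolynomial (Fin n ⊕ Fin n) ℂ →ₐ[ℂ] MvPolynomial (Fin n ⊕ Fin n) ℂ :=
  aeval (Sum.elim
    (fun i => (((ε i : ℤ) : ℂ)) • X (Sum.inl (σ i)))
    (fun i => (((ε i : ℤ) : ℂ)) • X (Sum.inr (σ i))))

/-- The ideal `I_W` generated by the `W(Bₙ)`-invariant polynomials of positive degree
(equivalently, by the invariant polynomials with zero constant term). -/
noncomputable def diagIdeal (n : ℕ) : Ideal (MvPolynomial (Fin n ⊕ Fin n) ℂ) :=
  Ideal.span {f | (∀ ε σ, bAct n ε σ f = f) ∧ constantCoeff f = 0}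

/-- The χ′-isotypic component of the diagonal coinvariant ring `R_W = R/I_W`, where
`χ'(ε,σ) = ∏ᵢ εᵢ` (trivial on permutations, `−1` on each sign change): it is the image
in `R/I_W` of those polynomials `g` with `(ε,σ)·g − χ'(ε,σ)·g ∈ I_W` for all
`(ε,σ) ∈ W(Bₙ)`. -/
noncomputable def chiIsotypic (n : ℕ) :
    Submodule ℂ (MvPolynomial (Fin n ⊕ Fin n) ℂ ⧸ diagIdeal n) :=
  (⨅ (ε : Fin n → ℤˣ) (σ : Equiv.Perm (Fin n)),
    Submodule.comap
      ((bAct n ε σ).toLinearMap - (((∏ i, ε i : ℤˣ) : ℤ) : ℂ) • LinearMap.id)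
      (Submodule.restrictScalars ℂ (diagIdeal n))).map
    (Ideal.Quotient.mkₐ ℂ (diagIdeal n)).toLinearMap

/-- exponent vectors -/
noncomputable def mkE (a b : Fin 4 → ℕ) : (Fin 4 ⊕ Fin 4) →₀ ℕ :=
  Finsupp.equivFunOnFinite.symm (Sum.elim a b)

@[simp] lemma mkE_inl (a b : Fin 4 → ℕ) (i) : mkE a b (Sum.inl i) = a i := rfl
@[simp] lemma mkE_inr (a b : Fin 4 → ℕ) (i) : mkE a b (Sum.inr i) = b i := rfl

lemma mkE_eta (q : (Fin 4 ⊕ Fin 4) →₀ ℕ) :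
    q = mkE (fun i => q (Sum.inl i)) (fun i => q (Sum.inr i)) := by
  ext s; rcases s with i | i <;> rfl

/-- The variables-wise form of a monomial. -/
lemma monomial_mkE (a b : Fin 4 → ℕ) :
    (monomial (mkE a b) 1 : MvPolynomial (Fin 4 ⊕ Fin 4) ℂ)
      = ∏ i, (X (Sum.inl i) ^ a i * X (Sum.inr i) ^ b i) := by
  rw [monomial_eq, C_1, one_mul, Finsupp.prod_fintype _ _ (by simp)]
  simp [Fintype.prod_sum_type, Finset.prod_mul_distrib]

lemma bAct_monomial (ε : Fin 4 → ℤˣ) (σ : Equiv.Perm (Fin 4)) (a b : Fin 4 → ℕ) :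
    bAct 4 ε σ (∏ i, (X (Sum.inl i) ^ a i * X (Sum.inr i) ^ b i))
      = (∏ i, (((ε i : ℤ) : ℂ)) ^ (a i + b i)) •
        ∏ i, (X (Sum.inl (σ i)) ^ a i * X (Sum.inr (σ i)) ^ b i) := by
  rw [map_prod, ← Finset.prod_smul]
  refine Finset.prod_congr rfl fun i _ => ?_
  simp only [bAct, map_mul, map_pow, aeval_X, Sum.elim_inl, Sum.elim_inr, smul_pow]
  rw [smul_mul_smul_comm, pow_add]

lemma coeff_bAct_sign (ε : Fin 4 → ℤˣ) (f : MvPolynomial (Fin 4 ⊕ Fin 4) ℂ)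
    (q : (Fin 4 ⊕ Fin 4) →₀ ℕ) :
    coeff q (bAct 4 ε 1 f)
      = (∏ i, (((ε i : ℤ) : ℂ)) ^ (q (Sum.inl i) + q (Sum.inr i))) * coeff q f := by
  induction f using MvPolynomial.induction_on' with
  | monomial u c =>
    have h : (monomial u c : MvPolynomial (Fin 4 ⊕ Fin 4) ℂ) = c • monomial u 1 := by
      simp [smul_monomial]
    rw [h, map_smul, coeff_smul, coeff_smul]
    have h2 := bAct_monomial ε 1 (fun i => u (Sum.inl i)) (fun i => u (Sum.inr i))
    simp only [Equiv.Perm.coe_one, id] at h2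
    rw [← monomial_mkE, ← mkE_eta] at h2
    rw [h2, coeff_smul, coeff_monomial]
    split_ifs with hu
    · subst hu; simp [mul_comm]
    · simp
  | add p q hp hq => simp only [map_add, coeff_add, hp, hq, mul_add]

lemma coeff_odd {h : MvPolynomial (Fin 4 ⊕ Fin 4) ℂ} (hh : ∀ ε σ, bAct 4 ε σ h = h)
    (q : (Fin 4 ⊕ Fin 4) →₀ ℕ) (i : Fin 4) (ho : Odd (q (Sum.inl i) + q (Sum.inr i))) :
    coeff q h = 0 := by
  have h1 := coeff_bAct_sign (Function.update 1 i (-1)) h q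
  rw [hh, Finset.prod_eq_single i] at h1
  · simp [ho.neg_one_pow] at h1
    exact self_eq_neg.mp h1
  · intro j _ hj
    simp [Function.update_of_ne hj]
  · simp

lemma coeff_perm {h : MvPolynomial (Fin 4 ⊕ Fin 4) ℂ} (hh : ∀ ε σ, bAct 4 ε σ h = h)
    (σ : Equiv.Perm (Fin 4)) (a b : Fin 4 → ℕ) :
    coeff (mkE (a ∘ σ) (b ∘ σ)) h = coeff (mkE a b) h := by
  have h1 : bAct 4 1 σ h = rename (Sum.map σ σ) h := by
    rw [rename_eq_aeval] 
    unfold bAct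
    congr 2
    funext s
    rcases s with i | i <;> simp
  have inj : Function.Injective (Sum.map σ σ) :=
    Function.Injective.sumMap σ.injective σ.injective
  have h2 := coeff_rename_mapDomain (Sum.map σ σ) inj h (mkE (a ∘ σ) (b ∘ σ))
  rw [← h1, hh] at h2
  rw [← h2]
  congr 1
  ext s
  obtain ⟨t, rfl⟩ : ∃ t, s = Sum.map σ σ t := by
    rcases s with i | i
    · exact ⟨Sum.inl (σ.symm i), by simp⟩
    · exact ⟨Sum.inr (σ.symm i), by simp⟩
  rw [Finsupp.mapDomain_apply inj]
  rcases t with i | i <;> simp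

/-- Splitting the coefficient of a product. -/
lemma coeff_mul_split {h : MvPolynomial (Fin 4 ⊕ Fin 4) ℂ} (hh : ∀ ε σ, bAct 4 ε σ h = h)
    (g : MvPolynomial (Fin 4 ⊕ Fin 4) ℂ) (m : (Fin 4 ⊕ Fin 4) →₀ ℕ)
    (S : Finset (((Fin 4 ⊕ Fin 4) →₀ ℕ) × ((Fin 4 ⊕ Fin 4) →₀ ℕ)))
    (hS : ∀ p ∈ S, p.1 + p.2 = m)
    (hS' : ∀ p q, p + q = m → (∀ i, Even (q (Sum.inl i) + q (Sum.inr i))) → (p, q) ∈ S) :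
    coeff m (g * h) = ∑ p ∈ S, coeff p.1 g * coeff p.2 h := by
  classical
  rw [coeff_mul]
  symm
  refine Finset.sum_subset (fun p hp => by simpa using hS p hp) ?_
  rintro ⟨p, q⟩ hpq hn
  rw [Finset.HasAntidiagonal.mem_antidiagonal] at hpq
  by_cases he : ∀ i, Even (q (Sum.inl i) + q (Sum.inr i))
  · exact absurd (hS' p q hpq he) hn
  · push Not at he
    obtain ⟨i, hi⟩ := he
    rw [coeff_odd hh q i (by simpa using hi), mul_zero]

lemma mkE_ext {p : (Fin 4 ⊕ Fin 4) →₀ ℕ} {a b : Fin 4 → ℕ}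
    (h1 : ∀ i, p (Sum.inl i) = a i) (h2 : ∀ i, p (Sum.inr i) = b i) : p = mkE a b := by
  ext s; rcases s with i | i
  · exact h1 i
  · exact h2 i

lemma mkE_add (a b c d : Fin 4 → ℕ) : mkE a b + mkE c d = mkE (a + c) (b + d) := by
  ext s; rcases s with i | i <;> simp

lemma coeff_multilin {h : MvPolynomial (Fin 4 ⊕ Fin 4) ℂ} (hh : ∀ ε σ, bAct 4 ε σ h = h)
    (h0 : constantCoeff h = 0)
    (g : MvPolynomial (Fin 4 ⊕ Fin 4) ℂ) (a b : Fin 4 → ℕ) (hab : ∀ i, a i + b i = 1) :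
    coeff (mkE a b) (g * h) = 0 := by
  rw [coeff_mul_split hh g _ {(mkE a b, 0)}]
  · rw [Finset.sum_singleton]
    change _ * constantCoeff h = 0
    rw [h0, mul_zero]
  · simp
  · intro p q hpq he
    have hq : q = 0 := by
      ext s
      have key : ∀ i, q (Sum.inl i) = 0 ∧ q (Sum.inr i) = 0 := by
        intro i
        have e1 := DFunLike.congr_fun hpq (Sum.inl i)
        have e2 := DFunLike.congr_fun hpq (Sum.inr i)
        have e3 := he i
        have e4 := hab i
        simp only [Finsupp.add_apply, mkE_inl, mkE_inr] at e1 e2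
        rw [Nat.even_iff] at e3
        omega
      rcases s with i | i
      · exact (key i).1
      · exact (key i).2
    subst hq
    simp at hpq
    simp [hpq]

/-- Coefficients at a monomial which has degree 3 at the index `k` and 1 at all others. -/
lemma coeff_cubic {h : MvPolynomial (Fin 4 ⊕ Fin 4) ℂ} (hh : ∀ ε σ, bAct 4 ε σ h = h)
    (h0 : constantCoeff h = 0)
    (g : MvPolynomial (Fin 4 ⊕ Fin 4) ℂ) (a b : Fin 4 → ℕ) (k : Fin 4)
    (S : Finset (((Fin 4 ⊕ Fin 4) →₀ ℕ) × ((Fin 4 ⊕ Fin 4) →₀ ℕ)))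
    (hab : ∀ i, i ≠ k → a i + b i = 1)
    (hS : ∀ p ∈ S, p.1 + p.2 = mkE a b)
    (hk : ∀ r s t u, r + s = a k → t + u = b k → Even (s + u) → (s = 0 ∧ u = 0) ∨
      (mkE (Function.update a k r) (Function.update b k t),
        mkE (Function.update 0 k s) (Function.update 0 k u)) ∈ S) :
    coeff (mkE a b) (g * h) = ∑ p ∈ S, coeff p.1 g * coeff p.2 h := by
  classical
  rw [coeff_mul_split hh g _ (insert (mkE a b, 0) S)]
  · by_cases hm : (mkE a b, 0) ∈ S
    · rw [Finset.insert_eq_self.2 hm]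
    · rw [Finset.sum_insert hm]
      have : coeff 0 h = 0 := h0
      simp [this]
  · intro p hp
    rw [Finset.mem_insert] at hp
    rcases hp with rfl | hp
    · simp
    · exact hS p hp
  · intro p q hpq he
    have e1 := fun i => DFunLike.congr_fun hpq (Sum.inl i)
    have e2 := fun i => DFunLike.congr_fun hpq (Sum.inr i)
    simp only [Finsupp.add_apply, mkE_inl, mkE_inr] at e1 e2
    have key : ∀ i, i ≠ k → q (Sum.inl i) = 0 ∧ q (Sum.inr i) = 0 := by
      intro i hi
      have e3 := he i
      have e4 := hab i hi
      have := e1 i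
      have := e2 i
      rw [Nat.even_iff] at e3
      omega
    have hq : q = mkE (Function.update 0 k (q (Sum.inl k)))
        (Function.update 0 k (q (Sum.inr k))) := by
      apply mkE_ext <;> intro i <;> by_cases hi : i = k
      · subst hi; simp
      · simp [hi, key i hi]
      · subst hi; simp
      · simp [hi, key i hi]
    have hp : p = mkE (Function.update a k (p (Sum.inl k)))
        (Function.update b k (p (Sum.inr k))) := by
      apply mkE_ext <;> intro i <;> by_cases hi : i = k
      · subst hi; simp
      · have := e1 i
        simp [hi, key i hi] at this ⊢
        exact this
      · subst hi; simp
      · have := e2 i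
        simp [hi, key i hi] at this ⊢
        exact this
    rw [Finset.mem_insert]
    rcases hk _ _ _ _ (e1 k) (e2 k) (he k) with ⟨h1, h2⟩ | h1
    · left
      have : q = 0 := by
        rw [hq, h1, h2]
        ext s; rcases s with i | i <;> simp
      subst this
      simp at hpq
      simp [hpq]
    · right
      rw [← hp, ← hq] at h1
      exact h1

/-- The symmetrised monomials. -/
noncomputable def symT (a b : Fin 4 → ℕ) : MvPolynomial (Fin 4 ⊕ Fin 4) ℂ :=
  ∑ τ : Equiv.Perm (Fin 4), ∏ i, (X (Sum.inl (τ i)) ^ a i * X (Sum.inr (τ i)) ^ b i)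

lemma symT_eq (a b : Fin 4 → ℕ) :
    symT a b = ∑ τ : Equiv.Perm (Fin 4),
      ∏ i, (X (Sum.inl i) ^ a (τ.symm i) * X (Sum.inr i) ^ b (τ.symm i)) := by
  refine Finset.sum_congr rfl fun τ _ => ?_
  refine Fintype.prod_equiv τ _ _ fun i => by simp

lemma bAct_symT (ε : Fin 4 → ℤˣ) (σ : Equiv.Perm (Fin 4)) (a b : Fin 4 → ℕ)
    (hab : ∀ i, Odd (a i + b i)) :
    bAct 4 ε σ (symT a b) = (((∏ i, ε i : ℤˣ) : ℤ) : ℂ) • symT a b := by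
  conv_lhs => rw [symT_eq]
  rw [map_sum]
  simp only [bAct_monomial]
  have hs : ∀ τ : Equiv.Perm (Fin 4),
      (∏ i, (((ε i : ℤ) : ℂ)) ^ (a (τ.symm i) + b (τ.symm i)))
        = (((∏ i, ε i : ℤˣ) : ℤ) : ℂ) := by
    intro τ
    rw [Units.coe_prod, Int.cast_prod]
    refine Finset.prod_congr rfl fun i _ => ?_
    rcases Int.units_eq_one_or (ε i) with h | h <;> simp [h, (hab _).neg_one_pow]
  simp only [hs]
  rw [← Finset.smul_sum]
  refine congrArg _ ?_
  unfold symT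
  refine Fintype.sum_equiv (Equiv.mulLeft σ) _ _ fun τ => ?_
  refine Fintype.prod_equiv τ.symm _ _ fun i => by simp

lemma coeff_symT (a b c d : Fin 4 → ℕ) :
    coeff (mkE c d) (symT a b)
      = ((Finset.univ.filter (fun τ : Equiv.Perm (Fin 4) =>
          ∀ i, a i = c (τ i) ∧ b i = d (τ i))).card : ℂ) := by
  rw [symT_eq, coeff_sum, Finset.card_filter, Nat.cast_sum]
  refine Finset.sum_congr rfl fun τ _ => ?_
  have := monomial_mkE (fun i => a (τ.symm i)) (fun i => b (τ.symm i))
  rw [← this, coeff_monomial]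
  have : mkE (fun i => a (τ.symm i)) (fun i => b (τ.symm i)) = mkE c d ↔
      ∀ i, a i = c (τ i) ∧ b i = d (τ i) := by
    constructor
    · intro h i
      have h1 := DFunLike.congr_fun h (Sum.inl (τ i))
      have h2 := DFunLike.congr_fun h (Sum.inr (τ i))
      simp at h1 h2
      exact ⟨h1, h2⟩
    · intro h
      apply mkE_ext
      · intro i; have := (h (τ.symm i)).1; simpa using this
      · intro i; have := (h (τ.symm i)).2; simpa using this
  simp [this]

/-- Exponents of the six generators. -/
def eA : Fin 6 → Fin 4 → ℕ :=
  ![![1,1,1,1], ![1,1,1,0], ![1,1,0,0], ![1,0,0,0], ![0,0,0,0], ![3,0,0,0]]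
def eB : Fin 6 → Fin 4 → ℕ :=
  ![![0,0,0,0], ![0,0,0,1], ![0,0,1,1], ![0,1,1,1], ![1,1,1,1], ![0,1,1,1]]

noncomputable def cf (a b : Fin 4 → ℕ) : MvPolynomial (Fin 4 ⊕ Fin 4) ℂ →ₗ[ℂ] ℂ :=
  lcoeff ℂ (mkE a b)

lemma cf_apply (a b : Fin 4 → ℕ) (f) : cf a b f = coeff (mkE a b) f := rfl

/-- The six functionals. -/
noncomputable def phi (j : Fin 6) : MvPolynomial (Fin 4 ⊕ Fin 4) ℂ →ₗ[ℂ] ℂ :=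
  if j = 5 then
    cf ![3,0,0,0] ![0,1,1,1] - cf ![1,2,0,0] ![0,1,1,1]
      + cf ![1,1,1,0] ![0,0,2,1] - cf ![1,1,1,0] ![0,0,0,3]
  else cf (eA j) (eB j)

lemma phi5_gen {h : MvPolynomial (Fin 4 ⊕ Fin 4) ℂ} (hh : ∀ ε σ, bAct 4 ε σ h = h)
    (h0 : constantCoeff h = 0) (g : MvPolynomial (Fin 4 ⊕ Fin 4) ℂ) :
    phi 5 (g * h) = 0 := by
  classical
  have E1 : coeff (mkE ![3,0,0,0] ![0,1,1,1]) (g * h)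
      = coeff (mkE ![1,0,0,0] ![0,1,1,1]) g * coeff (mkE ![2,0,0,0] ![0,0,0,0]) h := by
    rw [coeff_cubic hh h0 g _ _ 0
      {(mkE ![1,0,0,0] ![0,1,1,1], mkE ![2,0,0,0] ![0,0,0,0])} (by decide)]
    · simp
    · simp [mkE_add]
    · intro r s t u h1 h2 h3
      simp at h1 h2
      obtain ⟨rfl, rfl⟩ := h2
      rw [Nat.even_iff] at h3
      obtain rfl | ⟨rfl, rfl⟩ : s = 0 ∨ (s = 2 ∧ r = 1) := by omega
      · left; simp
      · right; rw [Finset.mem_singleton]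
        refine Prod.ext (mkE_ext ?_ ?_) (mkE_ext ?_ ?_) <;> decide
  have E4 : coeff (mkE ![1,1,1,0] ![0,0,0,3]) (g * h)
      = coeff (mkE ![1,1,1,0] ![0,0,0,1]) g * coeff (mkE ![0,0,0,0] ![0,0,0,2]) h := by
    rw [coeff_cubic hh h0 g _ _ 3
      {(mkE ![1,1,1,0] ![0,0,0,1], mkE ![0,0,0,0] ![0,0,0,2])} (by decide)]
    · simp
    · simp [mkE_add]
    · intro r s t u h1 h2 h3
      simp at h1 h2
      obtain ⟨rfl, rfl⟩ := h1
      rw [Nat.even_iff] at h3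
      obtain rfl | ⟨rfl, rfl⟩ : u = 0 ∨ (u = 2 ∧ t = 1) := by omega
      · left; simp
      · right; rw [Finset.mem_singleton]
        refine Prod.ext (mkE_ext ?_ ?_) (mkE_ext ?_ ?_) <;> decide
  have E2 : coeff (mkE ![1,2,0,0] ![0,1,1,1]) (g * h)
      = coeff (mkE ![1,0,0,0] ![0,1,1,1]) g * coeff (mkE ![0,2,0,0] ![0,0,0,0]) h
      + coeff (mkE ![1,1,0,0] ![0,0,1,1]) g * coeff (mkE ![0,1,0,0] ![0,1,0,0]) h := by
    rw [coeff_cubic hh h0 g _ _ 1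
      {(mkE ![1,0,0,0] ![0,1,1,1], mkE ![0,2,0,0] ![0,0,0,0]),
       (mkE ![1,1,0,0] ![0,0,1,1], mkE ![0,1,0,0] ![0,1,0,0])} (by decide)]
    · rw [Finset.sum_pair]
      intro h
      have := DFunLike.congr_fun (congrArg Prod.fst h) (Sum.inl 1)
      simp at this
    · simp [mkE_add]
    · intro r s t u h1 h2 h3
      simp at h1 h2
      rw [Nat.even_iff] at h3
      rw [Finset.mem_insert, Finset.mem_singleton]
      obtain h | ⟨rfl, rfl, rfl, rfl⟩ | ⟨rfl, rfl, rfl, rfl⟩ : (s = 0 ∧ u = 0) ∨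
          (r = 0 ∧ s = 2 ∧ t = 1 ∧ u = 0) ∨ (r = 1 ∧ s = 1 ∧ t = 0 ∧ u = 1) := by omega
      · left; exact h
      · right; left
        refine Prod.ext (mkE_ext ?_ ?_) (mkE_ext ?_ ?_) <;> decide
      · right; right
        refine Prod.ext (mkE_ext ?_ ?_) (mkE_ext ?_ ?_) <;> decide
  have E3 : coeff (mkE ![1,1,1,0] ![0,0,2,1]) (g * h)
      = coeff (mkE ![1,1,0,0] ![0,0,1,1]) g * coeff (mkE ![0,0,1,0] ![0,0,1,0]) h
      + coeff (mkE ![1,1,1,0] ![0,0,0,1]) g * coeff (mkE ![0,0,0,0] ![0,0,2,0]) h := by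
    rw [coeff_cubic hh h0 g _ _ 2
      {(mkE ![1,1,0,0] ![0,0,1,1], mkE ![0,0,1,0] ![0,0,1,0]),
       (mkE ![1,1,1,0] ![0,0,0,1], mkE ![0,0,0,0] ![0,0,2,0])} (by decide)]
    · rw [Finset.sum_pair]
      intro h
      have := DFunLike.congr_fun (congrArg Prod.fst h) (Sum.inl 2)
      simp at this
    · simp [mkE_add]
    · intro r s t u h1 h2 h3
      simp at h1 h2
      rw [Nat.even_iff] at h3
      rw [Finset.mem_insert, Finset.mem_singleton]
      obtain h | ⟨rfl, rfl, rfl, rfl⟩ | ⟨rfl, rfl, rfl, rfl⟩ : (s = 0 ∧ u = 0) ∨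
          (r = 0 ∧ s = 1 ∧ t = 1 ∧ u = 1) ∨ (r = 1 ∧ s = 0 ∧ t = 0 ∧ u = 2) := by omega
      · left; exact h
      · right; left
        refine Prod.ext (mkE_ext ?_ ?_) (mkE_ext ?_ ?_) <;> decide
      · right; right
        refine Prod.ext (mkE_ext ?_ ?_) (mkE_ext ?_ ?_) <;> decide
  have P1 : coeff (mkE ![2,0,0,0] ![0,0,0,0]) h = coeff (mkE ![0,2,0,0] ![0,0,0,0]) h := by
    rw [← coeff_perm hh (Equiv.swap 0 1) ![0,2,0,0] ![0,0,0,0]]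
    congr 2 <;> decide
  have P2 : coeff (mkE ![0,1,0,0] ![0,1,0,0]) h = coeff (mkE ![0,0,1,0] ![0,0,1,0]) h := by
    rw [← coeff_perm hh (Equiv.swap 1 2) ![0,0,1,0] ![0,0,1,0]]
    congr 2 <;> decide
  have P3 : coeff (mkE ![0,0,0,0] ![0,0,2,0]) h = coeff (mkE ![0,0,0,0] ![0,0,0,2]) h := by
    rw [← coeff_perm hh (Equiv.swap 2 3) ![0,0,0,0] ![0,0,0,2]]
    congr 2 <;> decide
  simp only [phi, if_true, LinearMap.sub_apply, LinearMap.add_apply, cf_apply,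
    E1, E2, E3, E4, P1, P2, P3]
  ring

lemma phi_gen {h : MvPolynomial (Fin 4 ⊕ Fin 4) ℂ} (hh : ∀ ε σ, bAct 4 ε σ h = h)
    (h0 : constantCoeff h = 0) (g : MvPolynomial (Fin 4 ⊕ Fin 4) ℂ) (j : Fin 6) :
    phi j (g * h) = 0 := by
  by_cases hj : j = 5
  · subst hj; exact phi5_gen hh h0 g
  · rw [phi, if_neg hj, cf_apply]
    apply coeff_multilin hh h0
    revert j
    decide

lemma phi_ideal (j : Fin 6) (f : MvPolynomial (Fin 4 ⊕ Fin 4) ℂ) (hf : f ∈ diagIdeal 4) :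
    phi j f = 0 := by
  have key : ∀ g, phi j (g * f) = 0 := by
    induction hf using Submodule.span_induction with
    | mem x hx => exact fun g => phi_gen hx.1 hx.2 g j
    | zero => simp
    | add x y _ _ hx hy => intro g; rw [mul_add, map_add, hx, hy, add_zero]
    | smul a x hx ih => intro g; rw [smul_eq_mul, ← mul_assoc]; exact ih _
  simpa using key 1

def cnt (a b c d : Fin 4 → ℕ) : ℕ := (Finset.univ.filter (fun τ : Equiv.Perm (Fin 4) =>
          ∀ i, a i = c (τ i) ∧ b i = d (τ i))).card

lemma cnt_off : ∀ i j : Fin 6, j ≠ 5 → i ≠ j → cnt (eA i) (eB i) (eA j) (eB j) = 0 := by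
  decide +kernel
lemma cnt_diag : ∀ i : Fin 6, cnt (eA i) (eB i) (eA i) (eB i) ≠ 0 := by
  decide +kernel
lemma cnt_5 : ∀ i : Fin 6,
    (i ≠ 5 → cnt (eA i) (eB i) ![3,0,0,0] ![0,1,1,1] = 0) ∧
    cnt (eA i) (eB i) ![1,2,0,0] ![0,1,1,1] = 0 ∧
    cnt (eA i) (eB i) ![1,1,1,0] ![0,0,2,1] = 0 ∧
    cnt (eA i) (eB i) ![1,1,1,0] ![0,0,0,3] = 0 := by
  decide +kernel

lemma cf_symT (a b c d : Fin 4 → ℕ) : cf c d (symT a b) = (cnt a b c d : ℂ) :=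
  coeff_symT a b c d

lemma phi_off (i j : Fin 6) (hij : i ≠ j) : phi j (symT (eA i) (eB i)) = 0 := by
  by_cases hj : j = 5
  · subst hj
    obtain ⟨h1, h2, h3, h4⟩ := cnt_5 i
    simp [phi, cf_symT, h1 hij, h2, h3, h4]
  · rw [phi, if_neg hj, cf_symT, cnt_off i j hj hij, Nat.cast_zero]

lemma phi_diag (j : Fin 6) : phi j (symT (eA j) (eB j)) ≠ 0 := by
  by_cases hj : j = 5
  · subst hj
    obtain ⟨h1, h2, h3, h4⟩ := cnt_5 5
    have := cnt_diag 5
    simp only [phi, if_true, LinearMap.sub_apply, LinearMap.add_apply, cf_symT, h2, h3, h4]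
    simpa [eA, eB] using this
  · rw [phi, if_neg hj, cf_symT]
    exact_mod_cast cnt_diag j

/-! Finite-dimensionality. -/

noncomputable def bigP (v : Fin 4 → Fin 4 ⊕ Fin 4) :
    Polynomial (MvPolynomial (Fin 4 ⊕ Fin 4) ℂ) :=
  ∏ i, (Polynomial.X - Polynomial.C (X (v i) ^ 2))

lemma bigP_map (v : Fin 4 → Fin 4 ⊕ Fin 4) (hv : v = Sum.inl ∨ v = Sum.inr) (ε σ) :
    (bigP v).map (bAct 4 ε σ).toRingHom = bigP v := by
  unfold bigP
  rw [Polynomial.map_prod]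
  refine Fintype.prod_equiv σ _ _ fun i => ?_
  have : ((ε i : ℤ) : ℂ) ^ 2 = 1 := by
    rcases Int.units_eq_one_or (ε i) with h | h <;> simp [h]
  rcases hv with rfl | rfl <;> simp [bAct, - map_pow] <;> rw [map_pow] <;> simp [smul_pow, this]

lemma bigP_mk (v : Fin 4 → Fin 4 ⊕ Fin 4) (hv : v = Sum.inl ∨ v = Sum.inr) :
    (bigP v).map (Ideal.Quotient.mk (diagIdeal 4)) = Polynomial.X ^ 4 := by
  rw [← sub_eq_zero]
  have : (Polynomial.X ^ 4 : Polynomial (MvPolynomial (Fin 4 ⊕ Fin 4) ℂ ⧸ diagIdeal 4))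
    = (Polynomial.X ^ 4 : Polynomial (MvPolynomial (Fin 4 ⊕ Fin 4) ℂ)).map
      (Ideal.Quotient.mk (diagIdeal 4)) := by simp
  rw [this, ← Polynomial.map_sub]
  ext k
  rw [Polynomial.coeff_map, Polynomial.coeff_zero, Ideal.Quotient.eq_zero_iff_mem]
  apply Ideal.subset_span
  refine ⟨fun ε σ => ?_, ?_⟩
  · have h1 : (bigP v - Polynomial.X ^ 4).map (bAct 4 ε σ).toRingHom
        = bigP v - Polynomial.X ^ 4 := by
      rw [Polynomial.map_sub, bigP_map v hv]; simp
    conv_rhs => rw [← h1]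
    rw [Polynomial.coeff_map]; rfl
  · rw [← Polynomial.coeff_map]
    have : (bigP v - Polynomial.X ^ 4).map (constantCoeff) = 0 := by
      simp [bigP, Polynomial.map_prod]
    rw [this, Polynomial.coeff_zero]

lemma X_pow_eight (v : Fin 4 → Fin 4 ⊕ Fin 4) (hv : v = Sum.inl ∨ v = Sum.inr) (i : Fin 4) :
    (Ideal.Quotient.mk (diagIdeal 4) (X (v i))) ^ 8 = 0 := by
  have h1 : (bigP v).eval (X (v i) ^ 2) = 0 := by
    unfold bigP
    rw [Polynomial.eval_prod]
    exact Finset.prod_eq_zero (Finset.mem_univ i) (by simp)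
  have h2 := congrArg (Ideal.Quotient.mk (diagIdeal 4)) h1
  rw [← Polynomial.eval_map_apply, bigP_mk v hv] at h2
  simp only [Polynomial.eval_pow, Polynomial.eval_X, map_pow, map_zero] at h2
  rw [← h2, ← pow_mul]

lemma fin_quot : Module.Finite ℂ (MvPolynomial (Fin 4 ⊕ Fin 4) ℂ ⧸ diagIdeal 4) := by
  have hint : Algebra.IsIntegral ℂ (MvPolynomial (Fin 4 ⊕ Fin 4) ℂ ⧸ diagIdeal 4) := by
    constructor
    intro z
    obtain ⟨p, rfl⟩ := Ideal.Quotient.mk_surjective z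
    induction p using MvPolynomial.induction_on with
    | C a => exact isIntegral_algebraMap (R := ℂ) (x := a)
    | add p q hp hq => rw [map_add]; exact hp.add hq
    | mul_X p s hp =>
      rw [map_mul]
      refine hp.mul ?_
      apply IsIntegral.of_pow (n := 8) (by norm_num)
      have : (Ideal.Quotient.mk (diagIdeal 4) (X s)) ^ 8 = 0 := by
        rcases s with i | i
        · exact X_pow_eight Sum.inl (Or.inl rfl) i
        · exact X_pow_eight Sum.inr (Or.inr rfl) i
      rw [this]
      exact isIntegral_zero
  exact Algebra.IsIntegral.finite

lemma symT_mem (j : Fin 6) :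
    Ideal.Quotient.mkₐ ℂ (diagIdeal 4) (symT (eA j) (eB j)) ∈ chiIsotypic 4 := by
  refine Submodule.mem_map_of_mem (f := (Ideal.Quotient.mkₐ ℂ (diagIdeal 4)).toLinearMap) ?_
  simp only [Submodule.mem_iInf, Submodule.mem_comap]
  intro ε σ
  have hodd : ∀ i, Odd (eA j i + eB j i) := by revert j; decide
  rw [LinearMap.sub_apply, AlgHom.toLinearMap_apply, bAct_symT ε σ _ _ hodd,
    LinearMap.smul_apply, LinearMap.id_apply, sub_self]
  exact Submodule.zero_mem _

/-- For `n = 4`, the χ′-isotypic component of the diagonal coinvariant ring of `W(B₄)`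
satisfies `dim_ℂ (R_W)^{χ'} ≥ 6`. -/
theorem dim_chi_isotypic_B4 : 6 ≤ Module.finrank ℂ (chiIsotypic 4) := by
  have := fin_quot
  let b : Fin 6 → chiIsotypic 4 := fun j => ⟨_, symT_mem j⟩
  have hb : LinearIndependent ℂ b := by
    rw [Fintype.linearIndependent_iff]
    intro g hg j
    have h1 := congrArg Subtype.val hg
    rw [Submodule.coe_sum] at h1
    have h2 : Ideal.Quotient.mk (diagIdeal 4) (∑ i, g i • symT (eA i) (eB i)) = 0 := by
      rw [map_sum]
      exact h1
    rw [Ideal.Quotient.eq_zero_iff_mem] at h2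
    have h3 := phi_ideal j _ h2
    rw [map_sum, Finset.sum_eq_single j] at h3
    · rw [map_smul, smul_eq_mul] at h3
      exact (mul_eq_zero.1 h3).resolve_right (phi_diag j)
    · intro i _ hij
      rw [map_smul, phi_off i j hij, smul_zero]
    · simp
  simpa using hb.fintype_card_le_finrank
end

section
/- For n = 6, the complex dimension of the χ'-isotypic component of the diagonal coinvariant ring R_W of W(B_6) satisfies dim_ℂ (R_W)^{χ'} ≥ 10. -/
open MvPolynomial

namespace B6

abbrev E := (Fin 6 ⊕ Fin 6) →₀ ℕ
abbrev R6 := MvPolynomial (Fin 6 ⊕ Fin 6) ℂ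

/-- degree in the pair `(x_i, y_i)` -/
def pd (u : E) (i : Fin 6) : ℕ := u (Sum.inl i) + u (Sum.inr i)
/-- total degree in the `x` variables -/
def xd (u : E) : ℕ := ∑ i, u (Sum.inl i)
/-- permuting an exponent -/
noncomputable def pm (σ : Equiv.Perm (Fin 6)) (u : E) : E := u.equivMapDomain (Equiv.sumCongr σ σ)

lemma pm_inl (σ : Equiv.Perm (Fin 6)) (u : E) (i : Fin 6) :
    pm σ u (Sum.inl i) = u (Sum.inl (σ.symm i)) := by
  simp [pm, Finsupp.equivMapDomain_apply]

lemma pm_inr (σ : Equiv.Perm (Fin 6)) (u : E) (i : Fin 6) :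
    pm σ u (Sum.inr i) = u (Sum.inr (σ.symm i)) := by
  simp [pm, Finsupp.equivMapDomain_apply]

lemma pd_pm (σ : Equiv.Perm (Fin 6)) (u : E) (i : Fin 6) : pd (pm σ u) i = pd u (σ.symm i) := by
  simp [pd, pm_inl, pm_inr]

lemma xd_pm (σ : Equiv.Perm (Fin 6)) (u : E) : xd (pm σ u) = xd u := by
  simp only [xd, pm_inl]
  exact Equiv.sum_comp σ.symm (fun i => u (Sum.inl i))

lemma ext_E {u v : E} (h1 : ∀ i, u (Sum.inl i) = v (Sum.inl i))
    (h2 : ∀ i, u (Sum.inr i) = v (Sum.inr i)) : u = v := by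
  ext i
  rcases i with i | i
  · exact h1 i
  · exact h2 i

lemma pm_mul (σ τ : Equiv.Perm (Fin 6)) (u : E) : pm σ (pm τ u) = pm (σ * τ) u := by
  apply ext_E <;> intro i <;> simp [pm_inl, pm_inr, ← Equiv.Perm.inv_def]

lemma pm_one (u : E) : pm 1 u = u := by
  apply ext_E <;> intro i <;> simp [pm_inl, pm_inr, ← Equiv.Perm.inv_def]

lemma pm_inj (σ : Equiv.Perm (Fin 6)) {u v : E} (h : pm σ u = pm σ v) : u = v := by
  have := congrArg (pm σ⁻¹) h
  rw [pm_mul, pm_mul] at this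
  simpa [pm_one] using this

noncomputable def sg (ε : Fin 6 → ℤˣ) (u : E) : ℂ := ∏ i, (((ε i : ℤ) : ℂ)) ^ pd u i

lemma bAct_monomial (ε : Fin 6 → ℤˣ) (σ : Equiv.Perm (Fin 6)) (u : E) (a : ℂ) :
    bAct 6 ε σ (monomial u a) = monomial (pm σ u) (a * sg ε u) := by
  have h : ∀ v : E, (monomial v (1:ℂ) : R6) =
      (∏ i, X (Sum.inl i) ^ v (Sum.inl i)) * ∏ i, X (Sum.inr i) ^ v (Sum.inr i) := by
    intro v
    rw [monomial_eq, Finsupp.prod_fintype _ _ (by simp), Fintype.prod_sum_type]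
    simp
  have h2 : bAct 6 ε σ (monomial u 1) = C (sg ε u) * monomial (pm σ u) 1 := by
    rw [h u, h (pm σ u)]
    simp only [map_mul, map_prod, map_pow, bAct, aeval_X, Sum.elim_inl, Sum.elim_inr, smul_eq_C_mul,
      mul_pow, Finset.prod_mul_distrib, sg, pd, pow_add, pm_inl, pm_inr]
    rw [← Equiv.prod_comp σ (fun i => (X (Sum.inl i) : R6) ^ u (Sum.inl (σ.symm i))),
      ← Equiv.prod_comp σ (fun i => (X (Sum.inr i) : R6) ^ u (Sum.inr (σ.symm i)))]
    simp only [Equiv.symm_apply_apply]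
    ring
  have h3 : (monomial u a : R6) = a • monomial u 1 := by simp [smul_monomial]
  rw [h3, map_smul, h2, C_mul_monomial, smul_monomial]
  simp

lemma coeff_bAct (ε : Fin 6 → ℤˣ) (σ : Equiv.Perm (Fin 6)) (f : R6) (u : E) :
    coeff (pm σ u) (bAct 6 ε σ f) = coeff u f * sg ε u := by
  induction f using MvPolynomial.induction_on' with
  | monomial v a =>
    rw [bAct_monomial, coeff_monomial, coeff_monomial]
    by_cases h : v = u
    · simp [h]
    · rw [if_neg h, if_neg (fun h' => h (pm_inj σ h'))]; simp
  | add p q hp hq => rw [map_add, coeff_add, coeff_add, hp, hq, add_mul]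

def Inv (f : R6) : Prop := (∀ ε σ, bAct 6 ε σ f = f) ∧ constantCoeff f = 0

lemma Inv.even {f : R6} (hf : Inv f) {u : E} (hu : coeff u f ≠ 0) (i : Fin 6) : Even (pd u i) := by
  have h := coeff_bAct (Function.update 1 i (-1)) 1 f u
  rw [hf.1, pm_one] at h
  have h2 : sg (Function.update 1 i (-1)) u = (-1) ^ pd u i := by
    rw [sg, Finset.prod_eq_single i]
    · simp
    · intro j _ hj; simp [Function.update_of_ne hj]
    · simp
  rw [h2] at h
  rcases Nat.even_or_odd (pd u i) with h3 | h3
  · exact h3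
  · rw [h3.neg_one_pow] at h
    exfalso; apply hu
    linear_combination h / 2

lemma Inv.ne {f : R6} (hf : Inv f) {u : E} (hu : coeff u f ≠ 0) : u ≠ 0 := by
  rintro rfl
  exact hu hf.2

lemma Inv.perm {f : R6} (hf : Inv f) (u : E) (σ : Equiv.Perm (Fin 6)) :
    coeff (pm σ u) f = coeff u f := by
  have h := coeff_bAct 1 σ f u
  rw [hf.1] at h
  simpa [sg] using h

/-- functional with prescribed values on monomials -/
noncomputable def fn (c : E → ℂ) : R6 →ₗ[ℂ] ℂ := (basisMonomials (Fin 6 ⊕ Fin 6) ℂ).constr ℂ c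

lemma fn_monomial (c : E → ℂ) (u : E) (a : ℂ) : fn c (monomial u a) = a * c u := by
  have h3 : (monomial u a : R6) = a • basisMonomials (Fin 6 ⊕ Fin 6) ℂ u := by
    simp [smul_monomial]
  rw [h3, map_smul, fn, Module.Basis.constr_basis, smul_eq_mul]

def Kills (c : E → ℂ) : Prop := ∀ f, Inv f → ∀ n : E, ∑ p ∈ f.support, coeff p f * c (n + p) = 0

lemma Kills.zero {c : E → ℂ} (hc : Kills c) {f : R6} (hf : f ∈ diagIdeal 6) : fn c f = 0 := by
  suffices h : ∀ g, fn c (g * f) = 0 by simpa using h 1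
  refine Submodule.span_induction (p := fun f _ => ∀ g, fn c (g * f) = 0) ?_ ?_ ?_ ?_ hf
  · intro f hf g
    induction g using MvPolynomial.induction_on' with
    | monomial n a =>
      conv_lhs => rw [f.as_sum]
      rw [Finset.mul_sum, map_sum]
      simp only [monomial_mul, fn_monomial, mul_assoc]
      rw [← Finset.mul_sum, hc f hf n, mul_zero]
    | add p q hp hq => rw [add_mul, map_add, hp, hq, add_zero]
  · simp
  · intro x y _ _ hx hy g
    rw [mul_add, map_add, hx, hy, add_zero]
  · intro a x _ hx g
    rw [smul_eq_mul, ← mul_assoc, hx]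

open Classical in
noncomputable def cA (k : ℕ) (u : E) : ℂ := if (∀ i, pd u i = 1) ∧ xd u = k then 1 else 0

open Classical in
noncomputable def cB (d : ℕ) (γ : ℕ → ℂ) (u : E) : ℂ :=
  ∑ i, if (∀ j, pd u j = if j = i then 3 else 1) ∧ xd u = d then γ (u (Sum.inl i)) else 0

lemma pd_add (u v : E) (i : Fin 6) : pd (u + v) i = pd u i + pd v i := by
  simp [pd]; ring

lemma xd_add (u v : E) : xd (u + v) = xd u + xd v := by
  simp [xd, Finset.sum_add_distrib]

lemma eq_zero_of_pd {u : E} (h : ∀ i, pd u i = 0) : u = 0 := by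
  apply ext_E <;> intro i <;> have := h i <;> simp [pd] at this <;> simp [this]

lemma kills_cA (k : ℕ) : Kills (cA k) := by
  intro f hf n
  apply Finset.sum_eq_zero
  intro p hp
  have hp : coeff p f ≠ 0 := by simpa using hp
  have : ¬ ((∀ i, pd (n + p) i = 1) ∧ xd (n + p) = k) := by
    rintro ⟨h, -⟩
    apply hf.ne hp
    apply eq_zero_of_pd
    intro i
    have h1 := h i
    rw [pd_add] at h1
    obtain ⟨r, hr⟩ := hf.even hp i
    omega
  rw [cA, if_neg this, mul_zero]

noncomputable def v (i : Fin 6) (j : ℕ) : E :=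
  Finsupp.single (Sum.inl i) j + Finsupp.single (Sum.inr i) (2 - j)

lemma v_inl (i : Fin 6) (j : ℕ) (l) : v i j (Sum.inl l) = if l = i then j else 0 := by
  simp [v, Finsupp.single_apply, eq_comm]
lemma v_inr (i : Fin 6) (j : ℕ) (l) : v i j (Sum.inr l) = if l = i then 2 - j else 0 := by
  simp only [v, Finsupp.add_apply, Finsupp.single_apply, reduceCtorEq, if_false, Sum.inr.injEq, eq_comm, zero_add]

lemma xd_v (i : Fin 6) (j : ℕ) : xd (v i j) = j := by
  simp [xd, v_inl]

lemma pd_v (i : Fin 6) (j : ℕ) (hj : j < 3) (l) : pd (v i j) l = if l = i then 2 else 0 := by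
  simp only [pd, v_inl, v_inr]; split_ifs <;> omega

lemma coeff_v {f : R6} (hf : Inv f) (i : Fin 6) (j : ℕ) : coeff (v i j) f = coeff (v 0 j) f := by
  rw [← hf.perm (v 0 j) (Equiv.swap 0 i)]
  congr 1
  apply ext_E <;> intro l
  · rw [pm_inl, v_inl, v_inl]
    simp only [Equiv.symm_swap, Equiv.swap_apply_eq_iff, Equiv.swap_apply_left]
  · rw [pm_inr, v_inr, v_inr]
    simp only [Equiv.symm_swap, Equiv.swap_apply_eq_iff, Equiv.swap_apply_left]

open Classical in
lemma key {f : R6} (hf : Inv f) {n p : E} (hp : coeff p f ≠ 0) {i : Fin 6}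
    (h : ∀ j, pd (n + p) j = if j = i then 3 else 1) :
    (∀ j, pd n j = 1) ∧ p ∈ (Finset.range 3).image (v i) := by
  have h0 : ∀ j, j ≠ i → pd p j = 0 ∧ pd n j = 1 := by
    intro j hj
    have h1 := h j
    rw [pd_add, if_neg hj] at h1
    obtain ⟨r, hr⟩ := hf.even hp j
    omega
  have h2 : pd p i = 2 ∧ pd n i = 1 := by
    have h1 := h i
    rw [pd_add, if_pos rfl] at h1
    obtain ⟨r, hr⟩ := hf.even hp i
    have : pd p i ≠ 0 := by
      intro h3
      apply hf.ne hp
      apply eq_zero_of_pd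
      intro j
      by_cases hj : j = i
      · rw [hj, h3]
      · exact (h0 j hj).1
    omega
  constructor
  · intro j
    by_cases hj : j = i
    · rw [hj]; exact h2.2
    · exact (h0 j hj).2
  · have h3 := h2.1
    unfold pd at h3
    rw [Finset.mem_image]
    refine ⟨p (Sum.inl i), by simp; omega, ?_⟩
    apply ext_E <;> intro l
    · rw [v_inl]
      by_cases hl : l = i
      · simp [hl]
      · have := (h0 l hl).1
        unfold pd at this
        rw [if_neg hl]; omega
    · rw [v_inr]
      by_cases hl : l = i
      · simp [hl]; omega
      · have := (h0 l hl).1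
        unfold pd at this
        rw [if_neg hl]; omega

lemma kills_cB (d : ℕ) (γ : ℕ → ℂ)
    (hγ : ∀ j k, j < 3 → k + j = d → 6 * γ j + k * (γ (j + 1) - γ j) = 0) : Kills (cB d γ) := by
  classical
  intro f hf n
  simp only [cB, Finset.mul_sum]
  rw [Finset.sum_comm]
  by_cases hn : ∀ j, pd n j = 1
  swap
  · apply Finset.sum_eq_zero; intro i _
    apply Finset.sum_eq_zero; intro p hp
    have hp : coeff p f ≠ 0 := by simpa using hp
    rw [if_neg, mul_zero]
    rintro ⟨h, -⟩
    exact hn (key hf hp h).1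
  have h1 : ∀ i : Fin 6, ∑ p ∈ f.support, coeff p f *
      (if (∀ j, pd (n + p) j = if j = i then 3 else 1) ∧ xd (n + p) = d then
        γ ((n + p) (Sum.inl i)) else 0) =
      ∑ j ∈ Finset.range 3, coeff (v 0 j) f *
        (if xd n + j = d then γ (n (Sum.inl i) + j) else 0) := by
    intro i
    have hinj : Set.InjOn (v i) (Finset.range 3) := by
      intro a _ b _ hab
      have := congrArg xd hab
      simpa [xd_v] using this
    trans ∑ p ∈ (Finset.range 3).image (v i), coeff p f *
      (if (∀ j, pd (n + p) j = if j = i then 3 else 1) ∧ xd (n + p) = d then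
        γ ((n + p) (Sum.inl i)) else 0)
    · trans ∑ p ∈ f.support ∪ (Finset.range 3).image (v i), coeff p f *
        (if (∀ j, pd (n + p) j = if j = i then 3 else 1) ∧ xd (n + p) = d then
          γ ((n + p) (Sum.inl i)) else 0)
      · apply Finset.sum_subset Finset.subset_union_left
        intro p _ hp
        have hp : coeff p f = 0 := by simpa using hp
        rw [hp, zero_mul]
      · symm
        apply Finset.sum_subset Finset.subset_union_right
        intro p _ hp
        by_cases hp0 : coeff p f = 0
        · rw [hp0, zero_mul]
        · rw [if_neg, mul_zero]
          rintro ⟨h, -⟩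
          exact hp (key hf hp0 h).2
    · rw [Finset.sum_image hinj]
      apply Finset.sum_congr rfl
      intro j hj
      have hj : j < 3 := by simpa using hj
      have h2 : ∀ l, pd (n + v i j) l = if l = i then 3 else 1 := by
        intro l
        rw [pd_add, hn, pd_v i j hj]; split_ifs <;> rfl
      have h3 : (n + v i j) (Sum.inl i) = n (Sum.inl i) + j := by simp [v_inl]
      simp only [coeff_v hf, h2, h3, xd_add, xd_v, implies_true, true_and]
  simp only [h1]
  rw [Finset.sum_comm]
  apply Finset.sum_eq_zero
  intro j hj
  have hj : j < 3 := by simpa using hj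
  rw [← Finset.mul_sum]
  by_cases hd : xd n + j = d
  swap
  · simp [hd]
  simp only [if_pos hd]
  have h4 : ∀ i, γ (n (Sum.inl i) + j) = γ j + (n (Sum.inl i) : ℂ) * (γ (j + 1) - γ j) := by
    intro i
    have := hn i
    unfold pd at this
    have h5 : n (Sum.inl i) = 0 ∨ n (Sum.inl i) = 1 := by omega
    rcases h5 with h5 | h5 <;> rw [h5]
    · simp
    · rw [add_comm 1 j]; simp
  simp only [h4]
  rw [Finset.sum_add_distrib, ← Finset.sum_mul, ← Nat.cast_sum]
  have := hγ j (xd n) hj hd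
  unfold xd at this
  simp only [Finset.sum_const, Finset.card_univ, Fintype.card_fin, nsmul_eq_mul]
  push_cast at this ⊢
  rw [this, mul_zero]

lemma cA_pm (k : ℕ) (σ : Equiv.Perm (Fin 6)) (u : E) : cA k (pm σ u) = cA k u := by
  simp only [cA, pd_pm, xd_pm]
  have : (∀ j, pd u (σ.symm j) = 1) ↔ (∀ j, pd u j = 1) := by
    rw [Equiv.forall_congr_left σ.symm]
    simp
  simp only [this]

lemma cB_pm (d : ℕ) (γ : ℕ → ℂ) (σ : Equiv.Perm (Fin 6)) (u : E) :
    cB d γ (pm σ u) = cB d γ u := by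
  classical
  simp only [cB, pd_pm, xd_pm, pm_inl]
  rw [← Equiv.sum_comp σ]
  apply Finset.sum_congr rfl
  intro i _
  have : (∀ j, pd u (σ.symm j) = if j = σ i then 3 else 1) ↔
      (∀ j, pd u j = if j = i then 3 else 1) := by
    rw [Equiv.forall_congr_left σ.symm]
    simp
  simp only [this, Equiv.symm_apply_apply]

/-- symmetrization of a monomial -/
noncomputable def sy (u : E) : R6 := ∑ τ : Equiv.Perm (Fin 6), monomial (pm τ u) 1

lemma fn_sy (c : E → ℂ) (hc : ∀ σ u, c (pm σ u) = c u) (u : E) : fn c (sy u) = 720 * c u := by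
  simp only [sy, map_sum, fn_monomial, hc, one_mul, Finset.sum_const, Finset.card_univ,
    Fintype.card_perm, Fintype.card_fin, nsmul_eq_mul]
  norm_num [Nat.factorial]

lemma sg_odd (ε : Fin 6 → ℤˣ) (u : E) (hu : ∀ i, Odd (pd u i)) :
    sg ε u = (((∏ i, ε i : ℤˣ) : ℤ) : ℂ) := by
  rw [sg, Units.coe_prod, Int.cast_prod]
  apply Finset.prod_congr rfl
  intro i _
  rcases Int.units_eq_one_or (ε i) with h | h
  · simp [h]
  · simp [h, (hu i).neg_one_pow]

lemma bAct_sy (ε : Fin 6 → ℤˣ) (σ : Equiv.Perm (Fin 6)) (u : E) (hu : ∀ i, Odd (pd u i)) :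
    bAct 6 ε σ (sy u) = (((∏ i, ε i : ℤˣ) : ℤ) : ℂ) • sy u := by
  have h : ∀ τ : Equiv.Perm (Fin 6), bAct 6 ε σ (monomial (pm τ u) 1) =
      (((∏ i, ε i : ℤˣ) : ℤ) : ℂ) • monomial (pm (σ * τ) u) 1 := by
    intro τ
    rw [bAct_monomial, pm_mul, sg_odd, smul_monomial]
    · simp
    · intro i; rw [pd_pm]; exact hu _
  simp only [sy, map_sum, h]
  rw [← Finset.smul_sum]
  refine congrArg _ ?_
  exact Fintype.sum_equiv (Equiv.mulLeft σ) _ _ (fun τ => by rw [Equiv.coe_mulLeft])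

lemma mem_chi (u : E) (hu : ∀ i, Odd (pd u i)) :
    Ideal.Quotient.mkₐ ℂ (diagIdeal 6) (sy u) ∈ chiIsotypic 6 := by
  refine ⟨sy u, ?_, rfl⟩
  simp only [SetLike.mem_coe, Submodule.mem_iInf, Submodule.mem_comap]
  intro ε σ
  simp [bAct_sy ε σ u hu]

/-! Finite-dimensionality -/

lemma nilp (s : Fin 6 → Fin 6 ⊕ Fin 6)
    (hs : ∀ ε σ i, ∃ e : ℂ, e ^ 2 = 1 ∧ bAct 6 ε σ (X (s i)) = e • X (s (σ i))) (i : Fin 6) :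
    (Ideal.Quotient.mkₐ ℂ (diagIdeal 6) (X (s i))) ^ 12 = 0 := by
  let P : Polynomial R6 := ∏ j, (Polynomial.X - Polynomial.C (X (s j) ^ 2))
  have hP : ∀ ε σ, P.map (bAct 6 ε σ : R6 →+* R6) = P := by
    intro ε σ
    simp only [P, Polynomial.map_prod, Polynomial.map_sub, Polynomial.map_X, Polynomial.map_C]
    rw [← Equiv.prod_comp σ (fun j => (Polynomial.X - Polynomial.C (X (s j) ^ 2 : R6)))]
    apply Finset.prod_congr rfl
    intro j _
    obtain ⟨e, he, h⟩ := hs ε σ j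
    simp [h, smul_pow, he]
  have hP0 : P.map (constantCoeff : R6 →+* ℂ) = Polynomial.X ^ 6 := by
    simp [P, Polynomial.map_prod]
  have hPm : P.Monic := Polynomial.monic_prod_of_monic _ _ fun j _ => Polynomial.monic_X_sub_C _
  have hdeg : P.natDegree = 6 := by
    rw [Polynomial.natDegree_prod_of_monic _ _ fun j _ => Polynomial.monic_X_sub_C _]
    simp only [Polynomial.natDegree_X_sub_C]
    simp
  have hq : P.map (Ideal.Quotient.mkₐ ℂ (diagIdeal 6)).toRingHom = Polynomial.X ^ 6 := by
    ext k
    rw [Polynomial.coeff_map, Polynomial.coeff_X_pow]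
    rcases lt_trichotomy k 6 with hk | hk | hk
    · rw [if_neg hk.ne]
      apply Ideal.Quotient.eq_zero_iff_mem.2
      apply Ideal.subset_span
      constructor
      · intro ε σ
        have := congrArg (fun Q => Polynomial.coeff Q k) (hP ε σ)
        simpa [Polynomial.coeff_map] using this
      · have := congrArg (fun Q => Polynomial.coeff Q k) hP0
        simpa [Polynomial.coeff_map, Polynomial.coeff_X_pow, hk.ne] using this
    · subst hk
      have : P.coeff 6 = 1 := by
        have h := hPm.coeff_natDegree
        rwa [hdeg] at h
      rw [this]; simp
    · rw [if_neg hk.ne', Polynomial.coeff_eq_zero_of_natDegree_lt (by omega), map_zero]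
  have h0 : P.eval (X (s i) ^ 2) = 0 := by
    simp only [P, Polynomial.eval_prod]
    exact Finset.prod_eq_zero (Finset.mem_univ i) (by simp)
  have h1 := congrArg (Polynomial.eval (Ideal.Quotient.mkₐ ℂ (diagIdeal 6) (X (s i) ^ 2))) hq
  have h2 := Polynomial.eval_map_apply (p := P)
    (Ideal.Quotient.mkₐ ℂ (diagIdeal 6)).toRingHom (X (s i) ^ 2)
  rw [h0, map_zero] at h2
  have h3 : (Ideal.Quotient.mkₐ ℂ (diagIdeal 6) (X (s i) ^ 2)) ^ 6 = 0 := by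
    rw [← Polynomial.eval_X (x := Ideal.Quotient.mkₐ ℂ (diagIdeal 6) (X (s i) ^ 2)),
      ← Polynomial.eval_pow, ← h1]
    exact h2
  rw [map_pow, ← pow_mul] at h3
  exact h3

lemma unit_sq (e : ℤˣ) : (((e : ℤ) : ℂ)) ^ 2 = 1 := by
  rcases Int.units_eq_one_or e with h | h <;> simp [h]

lemma nilp' (s : Fin 6 ⊕ Fin 6) : (Ideal.Quotient.mkₐ ℂ (diagIdeal 6) (X s)) ^ 12 = 0 := by
  rcases s with i | i
  · exact nilp Sum.inl (fun ε σ i => ⟨_, unit_sq (ε i), by simp [bAct]⟩) i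
  · exact nilp Sum.inr (fun ε σ i => ⟨_, unit_sq (ε i), by simp [bAct]⟩) i

lemma fin : Module.Finite ℂ (R6 ⧸ diagIdeal 6) := by
  have : Algebra.IsIntegral ℂ (R6 ⧸ diagIdeal 6) := by
    constructor
    intro a
    obtain ⟨f, rfl⟩ := Ideal.Quotient.mkₐ_surjective ℂ (diagIdeal 6) a
    induction f using MvPolynomial.induction_on with
    | C a =>
      have : Ideal.Quotient.mkₐ ℂ (diagIdeal 6) (C a) = algebraMap ℂ _ a :=
        (Ideal.Quotient.mkₐ ℂ (diagIdeal 6)).commutes a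
      rw [this]; exact isIntegral_algebraMap
    | add p q hp hq => rw [map_add]; exact hp.add hq
    | mul_X p s hp =>
      rw [map_mul]
      apply hp.mul
      apply IsIntegral.of_pow (n := 12) (by norm_num)
      rw [nilp']
      exact isIntegral_zero
  exact Algebra.IsIntegral.finite

/-! The ten elements and functionals -/

/-- exponent given by lists of x- and y-exponents -/
noncomputable def ex (a b : Fin 6 → ℕ) : E := Finsupp.equivFunOnFinite.symm (Sum.elim a b)

noncomputable def us : Fin 10 → E := ![
  ex ![0,0,0,0,0,0] ![1,1,1,1,1,1],
  ex ![1,0,0,0,0,0] ![0,1,1,1,1,1],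
  ex ![1,1,0,0,0,0] ![0,0,1,1,1,1],
  ex ![1,1,1,0,0,0] ![0,0,0,1,1,1],
  ex ![1,1,1,1,0,0] ![0,0,0,0,1,1],
  ex ![1,1,1,1,1,0] ![0,0,0,0,0,1],
  ex ![1,1,1,1,1,1] ![0,0,0,0,0,0],
  ex ![3,0,0,0,0,0] ![0,1,1,1,1,1],
  ex ![3,1,0,0,0,0] ![0,0,1,1,1,1],
  ex ![3,1,1,0,0,0] ![0,0,0,1,1,1]]

noncomputable def g3 : ℕ → ℂ | 0 => -1/10 | 1 => 1/10 | 2 => -2/10 | _ => 1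
noncomputable def g4 : ℕ → ℂ | 0 => -1 | 1 => 1/2 | 2 => -1/2 | _ => 1
noncomputable def g5 : ℕ → ℂ | 0 => -10 | 1 => 2 | 2 => -1 | _ => 1

noncomputable def cs : Fin 10 → E → ℂ := ![cA 0, cA 1, cA 2, cA 3, cA 4, cA 5, cA 6,
  cB 3 g3, cB 4 g4, cB 5 g5]

lemma cs_kills (r : Fin 10) : Kills (cs r) := by
  have h3 : Kills (cB 3 g3) := kills_cB _ _ (by
    intro j k hj hk
    obtain rfl : k = 3 - j := by omega
    interval_cases j <;> norm_num [g3])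
  have h4 : Kills (cB 4 g4) := kills_cB _ _ (by
    intro j k hj hk
    obtain rfl : k = 4 - j := by omega
    interval_cases j <;> norm_num [g4])
  have h5 : Kills (cB 5 g5) := kills_cB _ _ (by
    intro j k hj hk
    obtain rfl : k = 5 - j := by omega
    interval_cases j <;> norm_num [g5])
  fin_cases r
  iterate 7 exact kills_cA _
  · exact h3
  · exact h4
  · exact h5

lemma cs_pm (r : Fin 10) (σ : Equiv.Perm (Fin 6)) (u : E) : cs r (pm σ u) = cs r u := by
  fin_cases r
  iterate 7 exact cA_pm _ σ u
  all_goals exact cB_pm _ _ σ u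

lemma us_odd (r : Fin 10) (i : Fin 6) : Odd (pd (us r) i) := by
  have h : ∀ a b i, pd (ex a b) i = a i + b i := fun _ _ _ => rfl
  fin_cases r <;> simp only [us] <;> (revert i; simp [h, Fin.forall_fin_succ]; try decide)

lemma cA_ex (k : ℕ) (a b : Fin 6 → ℕ) :
    cA k (ex a b) = if (∀ i, a i + b i = 1) ∧ ∑ i, a i = k then 1 else 0 := by
  classical
  have : ((∀ i, pd (ex a b) i = 1) ∧ xd (ex a b) = k) ↔
    ((∀ i, a i + b i = 1) ∧ ∑ i, a i = k) := Iff.rfl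
  rw [cA]; simp only [this]

lemma cB_ex (d : ℕ) (γ : ℕ → ℂ) (a b : Fin 6 → ℕ) :
    cB d γ (ex a b) = ∑ i, if (∀ j, a j + b j = if j = i then 3 else 1) ∧ ∑ i, a i = d
      then γ (a i) else 0 := by
  classical
  rw [cB]
  apply Finset.sum_congr rfl
  intro i _
  have : ((∀ j, pd (ex a b) j = if j = i then 3 else 1) ∧ xd (ex a b) = d) ↔
    ((∀ j, a j + b j = if j = i then 3 else 1) ∧ ∑ i, a i = d) := Iff.rfl
  simp only [this]
  rfl

set_option maxHeartbeats 4000000 in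
lemma cs_us (r s : Fin 10) : cs r (us s) = if r = s then 1 else 0 := by
  fin_cases r <;> fin_cases s <;>
    simp [cs, us, cA_ex, cB_ex, Fin.forall_fin_succ, Fin.sum_univ_succ, g3, g4, g5]

end B6

/-- For `n = 6`, the χ′-isotypic component of the diagonal coinvariant ring of `W(B₆)`
satisfies `dim_ℂ (R_W)^{χ'} ≥ 10`. -/
theorem dim_chi_isotypic_B6 : 10 ≤ Module.finrank ℂ (chiIsotypic 6) := by
  have := B6.fin
  have hfin : Module.Finite ℂ (chiIsotypic 6) := inferInstance
  let b : Fin 10 → chiIsotypic 6 := fun r => ⟨_, B6.mem_chi (B6.us r) (B6.us_odd r)⟩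
  have hb : LinearIndependent ℂ b := by
    rw [Fintype.linearIndependent_iff]
    intro g hg r
    have h1 : Ideal.Quotient.mkₐ ℂ (diagIdeal 6) (∑ s, g s • B6.sy (B6.us s)) = 0 := by
      have := congrArg (Subtype.val) hg
      simpa [b] using this
    have h2 := (B6.cs_kills r).zero (Ideal.Quotient.eq_zero_iff_mem.1 h1)
    simp only [map_sum, map_smul, B6.fn_sy _ (B6.cs_pm r), B6.cs_us, smul_eq_mul] at h2
    simpa using h2
  simpa using hb.fintype_card_le_finrank
end
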